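/- Let Γ be the heat kernel on ℝ³: Γ(x,t) = (4πt)^{−3/2} exp(−|x|²/(4t)) for t > 0 and Γ(x,t) = 0 for t ≤ 0, and let ψ : ℝ → ℝ be a smooth function with 0 ≤ ψ ≤ 1, ψ(ξ) = 0 for ξ ≥ 1 and ψ(ξ) = 1 for ξ ≤ 1/2. Set Γ₁(x,t) := Γ(x,t) ψ(|x|) ψ(t) and Γ₂(x,t) := 2 ψ(t) ∇_x Γ(x,t)·∇_x(ψ(|x|)) + Γ(x,t) (ψ(t) Δ_x(ψ(|x|)) − ψ'(t) ψ(|x|)). Then there is a constant c₁ > 0 such that |∇_x Γ_i(ξ, s)| ≤ c₁/(|ξ|² + s)² for all ξ ∈ ℝ³, s > 0, and i = 1, 2. -/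

import Mathlib

noncomputable section
open Real

/-- `ℝ³` with the Euclidean norm. -/
abbrev E : Type := EuclideanSpace ℝ (Fin 3)

/-- Spatial partial derivative `∂ᵢ` of a scalar field on `ℝ³`. -/
def pdE (i : Fin 3) (f : E → ℝ) (x : E) : ℝ := fderiv ℝ f x (EuclideanSpace.single i 1)

/-- Spatial Laplacian of a scalar field on `ℝ³`. -/
def lapE (f : E → ℝ) (x : E) : ℝ := ∑ i, pdE i (fun y => pdE i f y) x

/-- The heat kernel `Γ` on `ℝ³`: `Γ(x,t) = (4πt)^{-3/2} exp(-|x|²/(4t))` for `t > 0`,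
and `0` for `t ≤ 0`. -/
def heatK (x : E) (t : ℝ) : ℝ :=
  if 0 < t then (4 * π * t) ^ (-(3:ℝ)/2) * Real.exp (-‖x‖^2 / (4*t)) else 0

/-- The spatial derivative of the heat kernel. -/
lemma hasFDerivAt_heatK {s : ℝ} (hs : 0 < s) (x : E) :
    HasFDerivAt (fun y => heatK y s) ((-(heatK x s / (2 * s))) • innerSL ℝ x) x := by
  have h : (fun y : E => heatK y s) =
      fun y => (4 * π * s) ^ (-(3:ℝ)/2) * Real.exp (-‖y‖^2 / (4*s)) := by
    funext y
    simp [heatK, hs]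
  have hn : HasFDerivAt (fun y : E => ‖y‖ ^ 2) (2 • innerSL ℝ x) x :=
    (hasStrictFDerivAt_norm_sq x).hasFDerivAt
  have hd := ((hn.neg.mul_const (4 * s)⁻¹).exp.const_mul ((4 * π * s) ^ (-(3:ℝ)/2)))
  rw [h]
  refine (hd.congr_fderiv ?_).congr_of_eventuallyEq (.of_forall fun y => ?_)
  · ext v
    simp [heatK, hs]
    field_simp
    ring
  · simp [div_eq_mul_inv]

lemma heatK_nonneg (x : E) (s : ℝ) : 0 ≤ heatK x s := by
  unfold heatK
  split_ifs <;> positivity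

/-- Polynomial decay of the heat kernel, with the time variable written as a square. -/
lemma exists_heatK_mul_pow_le (N : ℕ) : ∃ C, 0 ≤ C ∧ ∀ (x : E) (u : ℝ), 0 < u →
    heatK x (u ^ 2) * u ^ 3 * (‖x‖ ^ 2 + u ^ 2) ^ N ≤ C * (u ^ 2) ^ N := by
  refine ⟨4 ^ N * (N.factorial : ℝ) * Real.exp (1 / 4), by positivity, fun x u hu => ?_⟩
  have hu2 : 0 < u ^ 2 := by positivity
  have hprefactor : (4 * π * u ^ 2) ^ (-(3:ℝ)/2) * u ^ 3 ≤ 1 := by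
    have hle : (4 * π * u ^ 2) ^ (-(3:ℝ)/2) ≤ (u ^ 2) ^ (-(3:ℝ)/2) := by
      apply Real.rpow_le_rpow_of_nonpos hu2 _ (by norm_num)
      nlinarith [Real.pi_gt_three]
    have heq : (u ^ 2) ^ (-(3:ℝ)/2) = (u ^ 3)⁻¹ := by
      rw [← Real.rpow_natCast u 2, ← Real.rpow_mul hu.le, ← Real.rpow_natCast u 3,
        ← Real.rpow_neg hu.le]
      norm_num
    calc _ ≤ (u ^ 3)⁻¹ * u ^ 3 := by rw [← heq]; gcongr
      _ = 1 := by field_simp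
  have hexp : Real.exp (-‖x‖^2 / (4 * u ^ 2)) * (‖x‖ ^ 2 + u ^ 2) ^ N ≤
      4 ^ N * (N.factorial : ℝ) * Real.exp (1 / 4) * (u ^ 2) ^ N := by
    have hy := Real.pow_div_factorial_le_exp ((‖x‖ ^ 2 + u ^ 2) / (4 * u ^ 2)) (by positivity) N
    have hsplit : (‖x‖ ^ 2 + u ^ 2) / (4 * u ^ 2) = 1 / 4 + ‖x‖ ^ 2 / (4 * u ^ 2) := by
      field_simp
      ring
    rw [div_le_iff₀ (by positivity), div_pow, div_le_iff₀ (by positivity), hsplit,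
      Real.exp_add] at hy
    calc _ ≤ Real.exp (-‖x‖^2 / (4 * u ^ 2)) * (Real.exp (1 / 4) *
          Real.exp (‖x‖ ^ 2 / (4 * u ^ 2)) * N.factorial * (4 * u ^ 2) ^ N) := by gcongr
      _ = (Real.exp (-‖x‖^2 / (4 * u ^ 2)) * Real.exp (‖x‖ ^ 2 / (4 * u ^ 2))) *
          (4 ^ N * (N.factorial : ℝ) * Real.exp (1 / 4) * (u ^ 2) ^ N) := by
        rw [mul_pow]
        ring
      _ = _ := by
        rw [← Real.exp_add, neg_div, neg_add_cancel, Real.exp_zero, one_mul]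
  rw [heatK, if_pos hu2]
  calc _ = ((4 * π * u ^ 2) ^ (-(3:ℝ)/2) * u ^ 3) *
        (Real.exp (-‖x‖^2 / (4 * u ^ 2)) * (‖x‖ ^ 2 + u ^ 2) ^ N) := by ring
    _ ≤ 1 * (Real.exp (-‖x‖^2 / (4 * u ^ 2)) * (‖x‖ ^ 2 + u ^ 2) ^ N) := by gcongr
    _ ≤ _ := by rwa [one_mul]

/-- Product rule estimate for the heat kernel times a function that is bounded with its
derivative. -/
lemma norm_fderiv_heatK_mul_le {s M : ℝ} (hs : 0 < s) {f : E → ℝ} (hf : Differentiable ℝ f)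
    (hM : ∀ x, |f x| ≤ M ∧ ‖fderiv ℝ f x‖ ≤ M) (x : E) :
    ‖fderiv ℝ (fun y => heatK y s * f y) x‖ ≤ M * (heatK x s * (1 + ‖x‖ / s)) := by
  have hK := heatK_nonneg x s
  have hM0 : 0 ≤ M := (abs_nonneg _).trans (hM x).1
  rw [((hasFDerivAt_heatK hs x).fun_mul (hf x).hasFDerivAt).fderiv]
  refine (norm_add_le _ _).trans ?_
  rw [norm_smul, norm_smul, norm_smul, innerSL_apply_norm, norm_neg, Real.norm_of_nonneg hK,
    Real.norm_of_nonneg (by positivity : 0 ≤ heatK x s / (2 * s)), Real.norm_eq_abs]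
  have hhalf : heatK x s / (2 * s) * ‖x‖ ≤ heatK x s * (‖x‖ / s) := by
    rw [div_mul_eq_mul_div, mul_div_assoc]
    gcongr
    linarith
  calc _ ≤ heatK x s * M + M * (heatK x s * (‖x‖ / s)) := by
        gcongr
        exacts [(hM x).2, (hM x).1]
    _ = _ := by ring

lemma norm_div_sq_le (x : E) {u : ℝ} (hu : 0 < u) :
    ‖x‖ / u ^ 2 ≤ (‖x‖ ^ 2 + u ^ 2) / u ^ 3 := by
  rw [div_le_div_iff₀ (by positivity) (by positivity)]
  have h : ‖x‖ * u ≤ ‖x‖ ^ 2 + u ^ 2 := by nlinarith [sq_nonneg (‖x‖ - u), sq_nonneg (‖x‖ + u)]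
  calc _ = ‖x‖ * u * u ^ 2 := by ring
    _ ≤ _ := by gcongr

/-- Gradient bound for a localized heat kernel up to time one. -/
lemma exists_norm_fderiv_heatK_mul_le : ∃ C, 0 ≤ C ∧ ∀ (M : ℝ) (f : E → ℝ),
    Differentiable ℝ f → (∀ x, |f x| ≤ M ∧ ‖fderiv ℝ f x‖ ≤ M) → ∀ (x : E) (s : ℝ), 0 < s →
    s ≤ 1 → ‖fderiv ℝ (fun y => heatK y s * f y) x‖ ≤ C * M / (‖x‖ ^ 2 + s) ^ 2 := by
  obtain ⟨C₂, hC₂, h₂⟩ := exists_heatK_mul_pow_le 2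
  obtain ⟨C₃, hC₃, h₃⟩ := exists_heatK_mul_pow_le 3
  refine ⟨C₂ + C₃, by positivity, fun M f hf hM x s hs hs1 => ?_⟩
  obtain ⟨u, hu, rfl⟩ : ∃ u, 0 < u ∧ u ^ 2 = s := ⟨√s, by positivity, Real.sq_sqrt hs.le⟩
  have hu1 : u ≤ 1 := by nlinarith
  have hK := heatK_nonneg x (u ^ 2)
  have hM0 : 0 ≤ M := (abs_nonneg _).trans (hM x).1
  refine (norm_fderiv_heatK_mul_le hs hf hM x).trans ?_
  rw [le_div_iff₀ (by positivity)]
  have ha : heatK x (u ^ 2) * (‖x‖ ^ 2 + u ^ 2) ^ 2 ≤ C₂ := by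
    refine le_of_mul_le_mul_right ?_ (by positivity : 0 < u ^ 3)
    calc _ = heatK x (u ^ 2) * u ^ 3 * (‖x‖ ^ 2 + u ^ 2) ^ 2 := by ring
      _ ≤ C₂ * u ^ 3 * u := by linarith [h₂ x u hu]
      _ ≤ C₂ * u ^ 3 * 1 := by gcongr
      _ = _ := mul_one _
  have hb : heatK x (u ^ 2) * (‖x‖ / u ^ 2) * (‖x‖ ^ 2 + u ^ 2) ^ 2 ≤ C₃ := by
    calc _ ≤ heatK x (u ^ 2) * ((‖x‖ ^ 2 + u ^ 2) / u ^ 3) * (‖x‖ ^ 2 + u ^ 2) ^ 2 := by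
          gcongr heatK x (u ^ 2) * ?_ * _
          exact norm_div_sq_le x hu
      _ = heatK x (u ^ 2) * u ^ 3 * (‖x‖ ^ 2 + u ^ 2) ^ 3 / (u ^ 2) ^ 3 := by
          field_simp
      _ ≤ C₃ := by
          rw [div_le_iff₀ (by positivity)]
          exact h₃ x u hu
  calc _ = M * (heatK x (u ^ 2) * (‖x‖ ^ 2 + u ^ 2) ^ 2 +
        heatK x (u ^ 2) * (‖x‖ / u ^ 2) * (‖x‖ ^ 2 + u ^ 2) ^ 2) := by ring
    _ ≤ M * (C₂ + C₃) := by gcongr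
    _ = _ := by ring

/-- When the localizing function vanishes near the origin, the gradient bound gains a factor
of the time variable. -/
lemma exists_norm_fderiv_heatK_mul_le_of_eq_zero : ∃ C, 0 ≤ C ∧ ∀ (M : ℝ) (f : E → ℝ),
    Differentiable ℝ f → (∀ x, |f x| ≤ M ∧ ‖fderiv ℝ f x‖ ≤ M) →
    (∀ x, ‖x‖ < 1 / 2 → f x = 0) → ∀ (x : E) (s : ℝ), 0 < s → s ≤ 1 →
    ‖fderiv ℝ (fun y => heatK y s * f y) x‖ ≤ C * M * s / (‖x‖ ^ 2 + s) ^ 2 := by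
  obtain ⟨C₃, hC₃, h₃⟩ := exists_heatK_mul_pow_le 3
  obtain ⟨C₄, hC₄, h₄⟩ := exists_heatK_mul_pow_le 4
  refine ⟨4 * (C₃ + C₄), by positivity, fun M f hf hM hf0 x s hs hs1 => ?_⟩
  have hM0 : 0 ≤ M := (abs_nonneg _).trans (hM x).1
  rcases lt_or_ge ‖x‖ (1 / 2) with hx | hx
  · have hev : (fun y => heatK y s * f y) =ᶠ[nhds x] fun _ => 0 := by
      filter_upwards [(isOpen_lt continuous_norm continuous_const).mem_nhds hx] with y hy
      rw [hf0 y hy, mul_zero]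
    rw [hev.fderiv_eq, fderiv_fun_const]
    simp only [Pi.zero_apply, norm_zero]
    positivity
  obtain ⟨u, hu, rfl⟩ : ∃ u, 0 < u ∧ u ^ 2 = s := ⟨√s, by positivity, Real.sq_sqrt hs.le⟩
  have hu1 : u ≤ 1 := by nlinarith
  have hK := heatK_nonneg x (u ^ 2)
  have hρ : 1 ≤ 4 * (‖x‖ ^ 2 + u ^ 2) := by nlinarith
  refine (norm_fderiv_heatK_mul_le hs hf hM x).trans ?_
  rw [le_div_iff₀ (by positivity)]
  have ha : heatK x (u ^ 2) * (‖x‖ ^ 2 + u ^ 2) ^ 2 ≤ 4 * C₃ * u ^ 2 := by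
    refine le_of_mul_le_mul_right ?_ (by positivity : 0 < u ^ 3)
    calc _ = heatK x (u ^ 2) * u ^ 3 * (‖x‖ ^ 2 + u ^ 2) ^ 2 * 1 := by ring
      _ ≤ heatK x (u ^ 2) * u ^ 3 * (‖x‖ ^ 2 + u ^ 2) ^ 2 * (4 * (‖x‖ ^ 2 + u ^ 2)) := by gcongr
      _ ≤ 4 * C₃ * u ^ 5 * u := by linarith [h₃ x u hu]
      _ ≤ 4 * C₃ * u ^ 5 * 1 := by gcongr
      _ = _ := by ring
  have hb : heatK x (u ^ 2) * (‖x‖ / u ^ 2) * (‖x‖ ^ 2 + u ^ 2) ^ 2 ≤ 4 * C₄ * u ^ 2 := by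
    calc _ ≤ heatK x (u ^ 2) * ((‖x‖ ^ 2 + u ^ 2) / u ^ 3) * (‖x‖ ^ 2 + u ^ 2) ^ 2 * 1 := by
          rw [mul_one]
          gcongr heatK x (u ^ 2) * ?_ * _
          exact norm_div_sq_le x hu
      _ ≤ heatK x (u ^ 2) * ((‖x‖ ^ 2 + u ^ 2) / u ^ 3) * (‖x‖ ^ 2 + u ^ 2) ^ 2 *
          (4 * (‖x‖ ^ 2 + u ^ 2)) := by gcongr
      _ = 4 * (heatK x (u ^ 2) * u ^ 3 * (‖x‖ ^ 2 + u ^ 2) ^ 4) / u ^ 6 := by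
          field_simp
      _ ≤ _ := by
          rw [div_le_iff₀ (by positivity)]
          linarith [h₄ x u hu]
  calc _ = M * (heatK x (u ^ 2) * (‖x‖ ^ 2 + u ^ 2) ^ 2 +
        heatK x (u ^ 2) * (‖x‖ / u ^ 2) * (‖x‖ ^ 2 + u ^ 2) ^ 2) := by ring
    _ ≤ M * (4 * C₃ * u ^ 2 + 4 * C₄ * u ^ 2) := by gcongr
    _ = _ := by ring

/-- Smooth compactly supported functions are bounded together with their derivatives. -/
lemma exists_bound_fderiv_of_hasCompactSupport {f : E → ℝ} (hf : ContDiff ℝ (⊤ : ℕ∞) f)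
    (hc : HasCompactSupport f) : ∃ M, ∀ x, |f x| ≤ M ∧ ‖fderiv ℝ f x‖ ≤ M := by
  obtain ⟨M₁, h₁⟩ := hc.exists_bound_of_continuous hf.continuous
  obtain ⟨M₂, h₂⟩ := (hc.fderiv ℝ).exists_bound_of_continuous
    (hf.continuous_fderiv (by simp))
  exact ⟨max M₁ M₂, fun x => ⟨(h₁ x).trans (le_max_left _ _), (h₂ x).trans (le_max_right _ _)⟩⟩

lemma ContDiff.pdE {f : E → ℝ} (hf : ContDiff ℝ (⊤ : ℕ∞) f) (i : Fin 3) :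
    ContDiff ℝ (⊤ : ℕ∞) (pdE i f) :=
  (hf.fderiv_right (m := (⊤ : ℕ∞)) (by simp)).clm_apply contDiff_const

lemma HasCompactSupport.pdE {f : E → ℝ} (hf : HasCompactSupport f) (i : Fin 3) :
    HasCompactSupport (pdE i f) :=
  hf.fderiv_apply ℝ _

lemma pdE_eq_zero_of_forall_norm_lt {f : E → ℝ} {c r : ℝ} (hf : ∀ x, ‖x‖ < r → f x = c)
    (i : Fin 3) (x : E) (hx : ‖x‖ < r) : pdE i f x = 0 := by
  have hev : f =ᶠ[nhds x] fun _ => c := by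
    filter_upwards [(isOpen_lt continuous_norm continuous_const).mem_nhds hx] with y hy
    exact hf y hy
  rw [pdE, hev.fderiv_eq, fderiv_fun_const]
  simp

/-- A smooth profile that is constant near the origin gives a smooth radial function. -/
lemma contDiff_comp_norm {ψ : ℝ → ℝ} (hψ : ContDiff ℝ (⊤ : ℕ∞) ψ) {c r : ℝ} (hr : 0 < r)
    (h : ∀ ξ ≤ r, ψ ξ = c) : ContDiff ℝ (⊤ : ℕ∞) (fun x : E => ψ ‖x‖) := by
  rw [contDiff_iff_contDiffAt]
  intro x
  by_cases hx : x = 0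
  · subst hx
    refine (contDiffAt_const (c := c)).congr_of_eventuallyEq ?_
    filter_upwards [Metric.ball_mem_nhds (0 : E) hr] with y hy
    exact h _ (mem_ball_zero_iff.1 hy).le
  · exact hψ.contDiffAt.comp x (contDiffAt_norm ℝ hx)

/-- Pointwise bound on the spatial gradients of the localized heat kernels `Γ₁`, `Γ₂`
appearing in the proof of Lemma A.1. -/
theorem localized_heat_kernel_gradient_bound
    (ψ : ℝ → ℝ) (hψs : ContDiff ℝ (⊤ : ℕ∞) ψ)
    (hψ01 : ∀ ξ : ℝ, 0 ≤ ψ ξ ∧ ψ ξ ≤ 1)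
    (hψ1 : ∀ ξ : ℝ, 1 ≤ ξ → ψ ξ = 0) (hψhalf : ∀ ξ : ℝ, ξ ≤ 1/2 → ψ ξ = 1)
    (Γ₁ Γ₂ : E → ℝ → ℝ)
    (hΓ₁ : ∀ x t, Γ₁ x t = heatK x t * ψ ‖x‖ * ψ t)
    (hΓ₂ : ∀ x t, Γ₂ x t =
      2 * ψ t * (∑ i, pdE i (fun y => heatK y t) x * pdE i (fun y => ψ ‖y‖) x)
      + heatK x t * (ψ t * lapE (fun y => ψ ‖y‖) x - deriv ψ t * ψ ‖x‖)) :
    ∃ c₁ > 0, ∀ (ξ : E) (s : ℝ), 0 < s →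
      ‖fderiv ℝ (fun y => Γ₁ y s) ξ‖ ≤ c₁ / (‖ξ‖^2 + s)^2 ∧
      ‖fderiv ℝ (fun y => Γ₂ y s) ξ‖ ≤ c₁ / (‖ξ‖^2 + s)^2 := by
  set Φ : E → ℝ := fun y => ψ ‖y‖ with hΦ
  have hΦs : ContDiff ℝ (⊤ : ℕ∞) Φ := contDiff_comp_norm hψs (by norm_num) hψhalf
  have hΦc : HasCompactSupport Φ := by
    refine HasCompactSupport.intro (isCompact_closedBall (0 : E) 1) fun x hx => hψ1 _ ?_
    rw [mem_closedBall_zero_iff, not_le] at hx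
    exact hx.le
  set A : E → ℝ := fun x => ∑ i, x i * pdE i Φ x with hA
  have hAs : ContDiff ℝ (⊤ : ℕ∞) A :=
    ContDiff.sum fun i _ => (by fun_prop : ContDiff ℝ (⊤ : ℕ∞) fun x : E => x i).mul (hΦs.pdE i)
  have hAc : HasCompactSupport A := by
    refine HasCompactSupport.intro (isCompact_closedBall (0 : E) 1) fun x hx => ?_
    refine Finset.sum_eq_zero fun i _ => ?_
    have hsub : tsupport Φ ⊆ Metric.closedBall 0 1 := by
      refine closure_minimal (fun y hy => ?_) Metric.isClosed_closedBall
      by_contra hy'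
      rw [mem_closedBall_zero_iff, not_le] at hy'
      exact hy (hψ1 _ hy'.le)
    have hfd : fderiv ℝ Φ x = 0 := by
      by_contra hne
      exact hx (hsub (support_fderiv_subset ℝ hne))
    simp [pdE, hfd]
  have hA0 : ∀ x, ‖x‖ < 1 / 2 → A x = 0 := fun x hx =>
    Finset.sum_eq_zero fun i _ => by
      rw [pdE_eq_zero_of_forall_norm_lt (fun y hy => hψhalf _ hy.le) i x hx, mul_zero]
  have hBs : ContDiff ℝ (⊤ : ℕ∞) (lapE Φ) :=
    ContDiff.sum fun i _ => (hΦs.pdE i).pdE i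
  have hBc : HasCompactSupport (lapE Φ) := by
    have h : lapE Φ = pdE 0 (pdE 0 Φ) + pdE 1 (pdE 1 Φ) + pdE 2 (pdE 2 Φ) := by
      funext x
      simp [lapE, Fin.sum_univ_three]
    rw [h]
    exact (((hΦc.pdE 0).pdE 0).add ((hΦc.pdE 1).pdE 1)).add ((hΦc.pdE 2).pdE 2)
  obtain ⟨MΦ, hMΦ⟩ := exists_bound_fderiv_of_hasCompactSupport hΦs hΦc
  obtain ⟨MA, hMA⟩ := exists_bound_fderiv_of_hasCompactSupport hAs hAc
  obtain ⟨MB, hMB⟩ := exists_bound_fderiv_of_hasCompactSupport hBs hBc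
  obtain ⟨C, hC, hbound⟩ := exists_norm_fderiv_heatK_mul_le
  obtain ⟨C', hC', hbound'⟩ := exists_norm_fderiv_heatK_mul_le_of_eq_zero
  obtain ⟨D, hD⟩ := (isCompact_Icc (a := (0 : ℝ)) (b := 1)).exists_bound_of_continuousOn
    (hψs.continuous_deriv (by simp)).continuousOn
  have hMΦ0 : 0 ≤ MΦ := (abs_nonneg _).trans (hMΦ 0).1
  have hMA0 : 0 ≤ MA := (abs_nonneg _).trans (hMA 0).1
  have hMB0 : 0 ≤ MB := (abs_nonneg _).trans (hMB 0).1
  have hD0 : 0 ≤ D := (norm_nonneg _).trans (hD 0 (by simp))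
  have hΦd : Differentiable ℝ Φ := hΦs.differentiable (by simp)
  have hAd : Differentiable ℝ A := hAs.differentiable (by simp)
  have hBd : Differentiable ℝ (lapE Φ) := hBs.differentiable (by simp)
  refine ⟨C * MΦ + (C' * MA + C * MB + D * (C * MΦ)) + 1, by positivity, fun ξ s hs => ?_⟩
  rcases lt_or_ge 1 s with hs1 | hs1
  · have hψs0 : ψ s = 0 := hψ1 s hs1.le
    have hdψ : deriv ψ s = 0 := by
      have hev : ψ =ᶠ[nhds s] fun _ => 0 := by
        filter_upwards [lt_mem_nhds hs1] with t ht
        exact hψ1 t ht.le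
      rw [hev.deriv_eq, deriv_const]
    simp only [hΓ₁, hΓ₂, hψs0, hdψ, mul_zero, zero_mul, sub_zero, add_zero, fderiv_fun_const,
      Pi.zero_apply, norm_zero]
    constructor <;> positivity
  obtain ⟨hψ0, hψle⟩ := hψ01 s
  have hKd : Differentiable ℝ fun y => heatK y s := fun y =>
    (hasFDerivAt_heatK hs y).differentiableAt
  have hΓ₁s : (fun y => Γ₁ y s) = ψ s • fun y => heatK y s * Φ y := by
    funext y
    simp only [hΓ₁, hΦ, Pi.smul_apply, smul_eq_mul]
    ring
  have hΓ₂s : (fun y => Γ₂ y s) = (-(ψ s / s)) • (fun y => heatK y s * A y) +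
      ψ s • (fun y => heatK y s * lapE Φ y) - deriv ψ s • (fun y => heatK y s * Φ y) := by
    funext y
    have hpd : ∀ i, pdE i (fun z => heatK z s) y = -(heatK y s / (2 * s)) * y i := fun i => by
      rw [pdE, (hasFDerivAt_heatK hs y).fderiv]
      simp [EuclideanSpace.inner_single_right]
    simp only [hΓ₂, hpd, Pi.add_apply, Pi.sub_apply, Pi.smul_apply, smul_eq_mul, hA, mul_assoc,
      ← Finset.mul_sum]
    field_simp
    ring
  have h₁ := hbound MΦ Φ hΦd hMΦ ξ s hs hs1
  have h₂ := hbound' MA A hAd hMA hA0 ξ s hs hs1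
  have h₃ := hbound MB (lapE Φ) hBd hMB ξ s hs hs1
  set P := (‖ξ‖ ^ 2 + s) ^ 2
  have hP0 : 0 < P := by positivity
  constructor
  · rw [hΓ₁s, fderiv_const_smul (hKd.fun_mul hΦd ξ), norm_smul, Real.norm_of_nonneg hψ0]
    calc _ ≤ 1 * (C * MΦ / P) := by gcongr
      _ ≤ _ := by
        rw [one_mul]
        refine div_le_div_of_nonneg_right ?_ hP0.le
        linarith [mul_nonneg hC' hMA0, mul_nonneg hC hMB0, mul_nonneg hD0 (mul_nonneg hC hMΦ0)]
  · rw [hΓ₂s, fderiv_sub (((hKd.fun_mul hAd ξ).const_smul _).add ((hKd.fun_mul hBd ξ).const_smul _))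
        ((hKd.fun_mul hΦd ξ).const_smul _),
      fderiv_add ((hKd.fun_mul hAd ξ).const_smul _) ((hKd.fun_mul hBd ξ).const_smul _),
      fderiv_const_smul (hKd.fun_mul hAd ξ), fderiv_const_smul (hKd.fun_mul hBd ξ),
      fderiv_const_smul (hKd.fun_mul hΦd ξ)]
    refine (norm_sub_le _ _).trans ((add_le_add_left (norm_add_le _ _) _).trans ?_)
    rw [norm_smul, norm_smul, norm_smul, norm_neg, Real.norm_of_nonneg hψ0,
      Real.norm_of_nonneg (by positivity : 0 ≤ ψ s / s)]
    calc _ ≤ 1 / s * (C' * MA * s / P) + 1 * (C * MB / P) + D * (C * MΦ / P) := by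
          gcongr
          exact hD s ⟨hs.le, hs1⟩
      _ = (C' * MA + C * MB + D * (C * MΦ)) / P := by
          field_simp
      _ ≤ _ := by
          refine div_le_div_of_nonneg_right ?_ hP0.le
          linarith [mul_nonneg hC hMΦ0]
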